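/- Let d ≥ 1 be an integer and let P and Q be (α,C)-controlled probability measures on (0,1)^d for some C > 1 and 0 < α < 1. Then there exists a constant K > 0, depending only on d, C and α, such that for every h > 0 with 1/h a positive integer, |W₂²(G_h # P, G_h # Q) − W₂²(P, Q)| ≤ K·h^{1+α}. -/

import Mathlib

/-!
Let `γ` be a near-optimal coupling of `P` and `Q`. Moving its two marginals by Markov kernels with
displacements of size `O(h)` changes its cost by a first-order term, namely twice the correlations
of the displacement field of `γ` with the mean displacements (drifts) of the kernels, up to an error
of order `h²`. So everything reduces to one-sided bounds of order `h ^ (1 + α)` on correlations.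

Upper bound: snap both marginals of `γ` to the grid. The difference between the snapping fields of
mesh `g` and `2g` is half the displacement of the involution that exchanges adjacent cells of side
`g`. Proposing this involution and accepting it by the Metropolis rule gives a kernel that preserves
`P` and, since the density is Hölder, rejects with probability `O(g ^ α)` only, away from the
boundary of the cube. It turns `γ` into another coupling of `P` and `Q`, so near-optimality bounds
the correlation of the involution from below by `-O(g ^ (1 + α))`. Summing over the dyadic scales
`g = h / 2, h / 4, …` controls the correlation of the snapping field of mesh `h`.

Lower bound: start from a near-optimal coupling of the snapped measures and spread each cell centre
over its cell according to the conditional law. The drift is the barycentre of the cell minus its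
centre, which is `O(h ^ (1 + α))` in the interior, as the density is constant on the cell up to
`O(h ^ α)`, and `O(h)` on the boundary cells, whose total mass is `O(h)`.
-/

open MeasureTheory
open scoped ENNReal RealInnerProductSpace

noncomputable section

abbrev Euc (d : ℕ) := EuclideanSpace ℝ (Fin d)

/-- The open unit cube `(0,1)^d`. -/
def unitCube (d : ℕ) : Set (Euc d) := {x | ∀ i, x i ∈ Set.Ioo (0 : ℝ) 1}

/-- `G_h` : map each point to the center of the axis-aligned grid cell
(of side length `h`) containing it. -/
def gridSnap (d : ℕ) (h : ℝ) (x : Euc d) : Euc d :=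
  (EuclideanSpace.equiv (Fin d) ℝ).symm fun i => h * ⌊x i / h⌋ + h / 2

/-- Couplings of two Borel (probability) measures: probability measures on
the product with the prescribed marginals. -/
def Couplings {d : ℕ} (P Q : Measure (Euc d)) : Set (Measure (Euc d × Euc d)) :=
  {γ | IsProbabilityMeasure γ ∧ γ.map Prod.fst = P ∧ γ.map Prod.snd = Q}

/-- Squared 2-Wasserstein distance. -/
def W2sq {d : ℕ} (P Q : Measure (Euc d)) : ℝ :=
  sInf {r | ∃ γ ∈ Couplings P Q, r = ∫ p, ‖p.1 - p.2‖ ^ 2 ∂γ}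

/-- 2-Wasserstein distance. -/
def W2 {d : ℕ} (P Q : Measure (Euc d)) : ℝ := Real.sqrt (W2sq P Q)

/-- `P` and `Q` are `(α, C)`-controlled probability measures on `(0,1)^d`:
they possess densities `μ, ν` w.r.t. Lebesgue measure on `(0,1)^d` whose
`α`-Hölder seminorms sum to at most `C`, and which are bounded between
`C⁻¹` and `C`. -/
def IsControlled (d : ℕ) (α C : ℝ) (P Q : Measure (Euc d)) : Prop :=
  ∃ μ ν : Euc d → ℝ,
    P = (volume.restrict (unitCube d)).withDensity (fun x => ENNReal.ofReal (μ x)) ∧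
    Q = (volume.restrict (unitCube d)).withDensity (fun x => ENNReal.ofReal (ν x)) ∧
    (∃ Cμ Cν : ℝ, 0 ≤ Cμ ∧ 0 ≤ Cν ∧ Cμ + Cν ≤ C ∧
      (∀ x ∈ unitCube d, ∀ y ∈ unitCube d, |μ x - μ y| ≤ Cμ * ‖x - y‖ ^ α) ∧
      (∀ x ∈ unitCube d, ∀ y ∈ unitCube d, |ν x - ν y| ≤ Cν * ‖x - y‖ ^ α)) ∧
    (∀ x ∈ unitCube d, C⁻¹ ≤ μ x ∧ μ x ≤ C) ∧
    (∀ x ∈ unitCube d, C⁻¹ ≤ ν x ∧ ν x ≤ C)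

open ProbabilityTheory
open scoped NNReal

/-! ### Transport cost under Markov kernels -/

section KernelDrift

variable {E : Type*} [NormedAddCommGroup E] [NormedSpace ℝ E] [MeasurableSpace E]

/-- The mean displacement of one step of the kernel `κ` started at `x`. -/
def drift (κ : Kernel E E) (x : E) : E := ∫ x', (x' - x) ∂κ x

/-- Under the initial law `P`, one step of the kernel `κ` almost surely moves by at most `r`. -/
def DisplacementLE (κ : Kernel E E) (P : Measure E) (r : ℝ) : Prop :=
  ∀ᵐ x ∂P, ∀ᵐ x' ∂κ x, ‖x' - x‖ ≤ r

lemma norm_drift_le {κ : Kernel E E} [IsMarkovKernel κ] {x : E} {r : ℝ}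
    (h : ∀ᵐ x' ∂κ x, ‖x' - x‖ ≤ r) : ‖drift κ x‖ ≤ r := by
  simpa only [drift, probReal_univ, mul_one] using norm_integral_le_of_norm_le_const h

variable [BorelSpace E] [SecondCountableTopology E]

lemma measurable_drift (κ : Kernel E E) [IsMarkovKernel κ] : Measurable (drift κ) := by
  have hsub : Measurable fun z : E × E => z.2 - z.1 := by fun_prop
  exact (StronglyMeasurable.integral_kernel_prod_right' (κ := κ) hsub.stronglyMeasurable).measurable

variable [CompleteSpace E]

lemma drift_deterministic {f : E → E} (hf : Measurable f) (x : E) :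
    drift (Kernel.deterministic f hf) x = f x - x := by
  rw [drift, Kernel.deterministic_apply, integral_dirac]

lemma drift_id (x : E) : drift Kernel.id x = 0 := by
  rw [drift, Kernel.id_apply, integral_dirac, sub_self]

end KernelDrift

section ProductCost

variable {E : Type*} [NormedAddCommGroup E] [InnerProductSpace ℝ E]

lemma norm_sub_sq_le_of_norm_sub_le {x y x' y' : E} {r s : ℝ} (hx : ‖x' - x‖ ≤ r)
    (hy : ‖y' - y‖ ≤ s) :
    ‖x' - y'‖ ^ 2 ≤ ‖x - y‖ ^ 2 + 2 * ⟪x - y, (x' - x) - (y' - y)⟫ + (r + s) ^ 2 := by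
  have hsplit : x' - y' = (x - y) + ((x' - x) - (y' - y)) := by abel
  have hnorm : ‖(x' - x) - (y' - y)‖ ≤ r + s := (norm_sub_le _ _).trans (add_le_add hx hy)
  rw [hsplit, norm_add_sq_real]
  gcongr

variable [CompleteSpace E] [MeasurableSpace E] [BorelSpace E] [SecondCountableTopology E]

lemma integral_norm_sub_sq_prod_le {μ ν : Measure E} [IsProbabilityMeasure μ]
    [IsProbabilityMeasure ν] {x y : E} {r s : ℝ} (hμ : ∀ᵐ x' ∂μ, ‖x' - x‖ ≤ r)
    (hν : ∀ᵐ y' ∂ν, ‖y' - y‖ ≤ s) :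
    ∫ z, ‖z.1 - z.2‖ ^ 2 ∂(μ.prod ν) ≤
      ‖x - y‖ ^ 2 + 2 * ⟪x - y, ∫ x', (x' - x) ∂μ - ∫ y', (y' - y) ∂ν⟫ + (r + s) ^ 2 := by
  have hμi : Integrable (fun x' => x' - x) μ := .of_bound (by fun_prop) r hμ
  have hνi : Integrable (fun y' => y' - y) ν := .of_bound (by fun_prop) s hν
  have hdiff : Integrable (fun z : E × E => (z.1 - x) - (z.2 - y)) (μ.prod ν) :=
    (hμi.comp_fst ν).sub (hνi.comp_snd μ)
  have hinner : Integrable (fun z : E × E => 2 * ⟪x - y, (z.1 - x) - (z.2 - y)⟫) (μ.prod ν) :=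
    (hdiff.const_inner _).const_mul 2
  have hmean : ∫ z : E × E, ((z.1 - x) - (z.2 - y)) ∂(μ.prod ν) =
      ∫ x', (x' - x) ∂μ - ∫ y', (y' - y) ∂ν := by
    rw [integral_sub (hμi.comp_fst ν) (hνi.comp_snd μ),
      integral_fun_fst (fun x' => x' - x), integral_fun_snd (fun y' => y' - y)]
    simp only [probReal_univ, one_smul]
  have hpointwise : ∀ᵐ z ∂(μ.prod ν), ‖z.1 - z.2‖ ^ 2 ≤
      ‖x - y‖ ^ 2 + 2 * ⟪x - y, (z.1 - x) - (z.2 - y)⟫ + (r + s) ^ 2 := by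
    filter_upwards [Measure.quasiMeasurePreserving_fst.ae hμ,
      Measure.quasiMeasurePreserving_snd.ae hν] with z hz₁ hz₂
    exact norm_sub_sq_le_of_norm_sub_le hz₁ hz₂
  have hsum : Integrable (fun z : E × E => ‖x - y‖ ^ 2 + 2 * ⟪x - y, (z.1 - x) - (z.2 - y)⟫)
      (μ.prod ν) := (integrable_const _).add hinner
  refine (integral_mono_of_nonneg (ae_of_all _ fun _ => sq_nonneg _)
    (hsum.add (integrable_const _)) hpointwise).trans_eq ?_
  rw [integral_add' hsum (integrable_const _), integral_add (integrable_const _) hinner,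
    integral_const_mul, integral_inner hdiff, hmean]
  simp only [integral_const, probReal_univ, one_smul]

end ProductCost

section BoundedDisplacement

variable {E : Type*} [NormedAddCommGroup E] [MeasurableSpace E] [BorelSpace E]
  [SecondCountableTopology E] {γ : Measure (E × E)} {D : ℝ}

lemma ae_map_swap_norm_sub_le (hD : ∀ᵐ p ∂γ, ‖p.1 - p.2‖ ≤ D) :
    ∀ᵐ p ∂(γ.map Prod.swap), ‖p.1 - p.2‖ ≤ D := by
  refine (ae_map_iff measurable_swap.aemeasurable
    (measurableSet_le (by fun_prop) measurable_const)).2 (hD.mono fun p hp => ?_)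
  exact (norm_sub_rev _ _).trans_le hp

lemma integrable_norm_sub_sq [IsFiniteMeasure γ] (hD : ∀ᵐ p ∂γ, ‖p.1 - p.2‖ ≤ D) :
    Integrable (fun p => ‖p.1 - p.2‖ ^ 2) γ := by
  refine .of_bound (by fun_prop) (D ^ 2) ?_
  filter_upwards [hD] with p hp
  rw [norm_pow, norm_norm]
  gcongr

end BoundedDisplacement

section Correlation

variable {E : Type*} [NormedAddCommGroup E] [InnerProductSpace ℝ E] [MeasurableSpace E]

/-- The correlation of the displacement of `γ` with a vector field `u` on its first marginal: half
the first-order change of the transport cost when that marginal moves with velocity `u`. -/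
def correlation (u : E → E) (γ : Measure (E × E)) : ℝ := ∫ p, ⟪p.1 - p.2, u p.1⟫ ∂γ

lemma correlation_zero (γ : Measure (E × E)) : correlation (fun _ => 0) γ = 0 := by
  simp only [correlation, inner_zero_right, integral_zero]

lemma correlation_smul (c : ℝ) (u : E → E) (γ : Measure (E × E)) :
    correlation (fun x => c • u x) γ = c * correlation u γ := by
  simp only [correlation, inner_smul_right, integral_const_mul]

lemma correlation_map_swap (u : E → E) (γ : Measure (E × E)) :
    correlation u (γ.map Prod.swap) = ∫ p, ⟪p.2 - p.1, u p.2⟫ ∂γ :=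
  integral_map_equiv MeasurableEquiv.prodComm _

variable [BorelSpace E] [SecondCountableTopology E] {γ : Measure (E × E)} [IsFiniteMeasure γ]
  {D : ℝ}

lemma integrable_inner_sub_fst {u : E → E} {M : ℝ} (hD : ∀ᵐ p ∂γ, ‖p.1 - p.2‖ ≤ D)
    (hu : Measurable u) (hM : ∀ᵐ p ∂γ, ‖u p.1‖ ≤ M) :
    Integrable (fun p => ⟪p.1 - p.2, u p.1⟫) γ := by
  refine .of_bound (by fun_prop) (D * M) ?_
  filter_upwards [hD, hM] with p hp hpu
  exact (norm_inner_le_norm _ _).trans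
    (mul_le_mul hp hpu (norm_nonneg _) ((norm_nonneg _).trans hp))

lemma correlation_sub {u v : E → E} {M N : ℝ} (hD : ∀ᵐ p ∂γ, ‖p.1 - p.2‖ ≤ D)
    (hu : Measurable u) (hM : ∀ᵐ p ∂γ, ‖u p.1‖ ≤ M) (hv : Measurable v)
    (hN : ∀ᵐ p ∂γ, ‖v p.1‖ ≤ N) :
    correlation (fun x => u x - v x) γ = correlation u γ - correlation v γ := by
  simp only [correlation, inner_sub_right]
  exact integral_sub (integrable_inner_sub_fst hD hu hM) (integrable_inner_sub_fst hD hv hN)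

end Correlation

section ParallelComp

variable {X Y X' Y' : Type*} [MeasurableSpace X] [MeasurableSpace Y] [MeasurableSpace X']
  [MeasurableSpace Y'] (κ : Kernel X X') (η : Kernel Y Y') [IsMarkovKernel κ] [IsMarkovKernel η]
  (γ : Measure (X × Y))

lemma map_fst_parallelComp_comp :
    ((κ ∥ₖ η) ∘ₘ γ).map Prod.fst = κ ∘ₘ (γ.map Prod.fst) := by
  ext s hs
  rw [Measure.map_apply measurable_fst hs,
    Measure.bind_apply (measurable_fst hs) (Kernel.aemeasurable _),
    Measure.bind_apply hs (Kernel.aemeasurable _),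
    lintegral_map (Kernel.measurable_coe _ hs) measurable_fst]
  refine lintegral_congr fun z => ?_
  rw [← Set.prod_univ, Kernel.parallelComp_apply_prod, measure_univ, mul_one]

lemma map_snd_parallelComp_comp :
    ((κ ∥ₖ η) ∘ₘ γ).map Prod.snd = η ∘ₘ (γ.map Prod.snd) := by
  ext s hs
  rw [Measure.map_apply measurable_snd hs,
    Measure.bind_apply (measurable_snd hs) (Kernel.aemeasurable _),
    Measure.bind_apply hs (Kernel.aemeasurable _),
    lintegral_map (Kernel.measurable_coe _ hs) measurable_snd]
  refine lintegral_congr fun z => ?_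
  rw [← Set.univ_prod, Kernel.parallelComp_apply_prod, measure_univ, one_mul]

end ParallelComp

section Wasserstein

variable {d : ℕ} {P Q : Measure (Euc d)} {γ : Measure (Euc d × Euc d)}

lemma W2sq_le_of_mem_couplings (hγ : γ ∈ Couplings P Q) :
    W2sq P Q ≤ ∫ p, ‖p.1 - p.2‖ ^ 2 ∂γ := by
  refine csInf_le ⟨0, ?_⟩ ⟨γ, hγ, rfl⟩
  rintro r ⟨γ, -, rfl⟩
  exact integral_nonneg fun p => sq_nonneg _

lemma exists_mem_couplings_integral_le [IsProbabilityMeasure P] [IsProbabilityMeasure Q] {ε : ℝ}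
    (hε : 0 < ε) : ∃ γ ∈ Couplings P Q, ∫ p, ‖p.1 - p.2‖ ^ 2 ∂γ ≤ W2sq P Q + ε := by
  have hprod : P.prod Q ∈ Couplings P Q := ⟨inferInstance, by simp, by simp⟩
  obtain ⟨_, ⟨γ, hγ, rfl⟩, hlt⟩ := Real.lt_sInf_add_pos
    (s := {r | ∃ γ ∈ Couplings P Q, r = ∫ p, ‖p.1 - p.2‖ ^ 2 ∂γ}) ⟨_, P.prod Q, hprod, rfl⟩ hε
  exact ⟨γ, hγ, hlt.le⟩

lemma map_swap_mem_couplings (hγ : γ ∈ Couplings P Q) : γ.map Prod.swap ∈ Couplings Q P := by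
  obtain ⟨_, hfst, hsnd⟩ := hγ
  refine ⟨Measure.isProbabilityMeasure_map measurable_swap.aemeasurable, ?_, ?_⟩
  · rw [Measure.map_map measurable_fst measurable_swap, ← hsnd]; rfl
  · rw [Measure.map_map measurable_snd measurable_swap, ← hfst]; rfl

lemma integral_norm_sub_sq_map_swap (γ : Measure (Euc d × Euc d)) :
    ∫ p, ‖p.1 - p.2‖ ^ 2 ∂(γ.map Prod.swap) = ∫ p, ‖p.1 - p.2‖ ^ 2 ∂γ := by
  refine (integral_map_equiv MeasurableEquiv.prodComm _).trans (integral_congr_ae ?_)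
  exact ae_of_all _ fun p => congrArg (· ^ 2) (norm_sub_rev p.2 p.1)

lemma W2sq_comm (P Q : Measure (Euc d)) : W2sq P Q = W2sq Q P := by
  have hswap : ∀ P Q : Measure (Euc d),
      {r | ∃ γ ∈ Couplings P Q, r = ∫ p, ‖p.1 - p.2‖ ^ 2 ∂γ} ⊆
        {r | ∃ γ ∈ Couplings Q P, r = ∫ p, ‖p.1 - p.2‖ ^ 2 ∂γ} := by
    rintro P Q _ ⟨γ, hγ, rfl⟩
    exact ⟨_, map_swap_mem_couplings hγ, (integral_norm_sub_sq_map_swap γ).symm⟩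
  exact congrArg sInf ((hswap P Q).antisymm (hswap Q P))

lemma ae_fst_of_mem_couplings (hγ : γ ∈ Couplings P Q) {p : Euc d → Prop}
    (hp : ∀ᵐ x ∂P, p x) : ∀ᵐ z ∂γ, p z.1 :=
  ae_of_ae_map measurable_fst.aemeasurable (hγ.2.1 ▸ hp)

lemma ae_snd_of_mem_couplings (hγ : γ ∈ Couplings P Q) {p : Euc d → Prop}
    (hp : ∀ᵐ y ∂Q, p y) : ∀ᵐ z ∂γ, p z.2 :=
  ae_of_ae_map measurable_snd.aemeasurable (hγ.2.2 ▸ hp)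

lemma abs_correlation_le (hγ : γ ∈ Couplings P Q) {D : ℝ} (hD : ∀ᵐ p ∂γ, ‖p.1 - p.2‖ ≤ D)
    {u : Euc d → Euc d} (hu : Integrable u P) :
    |correlation u γ| ≤ D * ∫ x, ‖u x‖ ∂P := by
  rw [← hγ.2.1] at hu ⊢
  rw [integral_map measurable_fst.aemeasurable hu.norm.1, ← integral_const_mul]
  rw [correlation, ← Real.norm_eq_abs]
  refine norm_integral_le_of_norm_le
    ((hu.norm.comp_measurable measurable_fst).const_mul D) (hD.mono fun p hp => ?_)
  exact (norm_inner_le_norm _ _).trans (mul_le_mul_of_nonneg_right hp (norm_nonneg _))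

lemma parallelComp_comp_mem_couplings (hγ : γ ∈ Couplings P Q) (κ η : Kernel (Euc d) (Euc d))
    [IsMarkovKernel κ] [IsMarkovKernel η] :
    (κ ∥ₖ η) ∘ₘ γ ∈ Couplings (κ ∘ₘ P) (η ∘ₘ Q) := by
  obtain ⟨_, rfl, rfl⟩ := hγ
  exact ⟨inferInstance, map_fst_parallelComp_comp κ η γ, map_snd_parallelComp_comp κ η γ⟩

section Perturbation

variable {κ η : Kernel (Euc d) (Euc d)} [IsMarkovKernel κ] [IsMarkovKernel η] {D r s : ℝ}

lemma integrable_inner_drift (hγ : γ ∈ Couplings P Q) (hD : ∀ᵐ p ∂γ, ‖p.1 - p.2‖ ≤ D)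
    (hκ : DisplacementLE κ P r) : Integrable (fun p => ⟪p.1 - p.2, drift κ p.1⟫) γ :=
  have := hγ.1
  integrable_inner_sub_fst hD (measurable_drift κ)
    ((ae_fst_of_mem_couplings hγ hκ).mono fun _ => norm_drift_le)

lemma integrable_and_integral_inner_drift_sub (hγ : γ ∈ Couplings P Q)
    (hD : ∀ᵐ p ∂γ, ‖p.1 - p.2‖ ≤ D) (hκ : DisplacementLE κ P r)
    (hη : DisplacementLE η Q s) :
    Integrable (fun p => ⟪p.1 - p.2, drift κ p.1 - drift η p.2⟫) γ ∧
      ∫ p, ⟪p.1 - p.2, drift κ p.1 - drift η p.2⟫ ∂γ =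
        correlation (drift κ) γ + correlation (drift η) (γ.map Prod.swap) := by
  have hfst := integrable_inner_drift hγ hD hκ
  have hsnd : Integrable (fun p => ⟪p.2 - p.1, drift η p.2⟫) γ :=
    (integrable_map_equiv MeasurableEquiv.prodComm _).1
      (integrable_inner_drift (map_swap_mem_couplings hγ) (ae_map_swap_norm_sub_le hD) hη)
  have hsplit : ∀ p : Euc d × Euc d, ⟪p.1 - p.2, drift κ p.1 - drift η p.2⟫ =
      ⟪p.1 - p.2, drift κ p.1⟫ + ⟪p.2 - p.1, drift η p.2⟫ := fun p => by
    rw [inner_sub_right, sub_eq_add_neg, ← inner_neg_left, neg_sub]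
  simp only [hsplit]
  exact ⟨hfst.add hsnd, by rw [integral_add hfst hsnd, correlation_map_swap]; rfl⟩

lemma ae_parallelComp_comp_norm_sub_le (hγ : γ ∈ Couplings P Q)
    (hD : ∀ᵐ p ∂γ, ‖p.1 - p.2‖ ≤ D) (hκ : DisplacementLE κ P r) (hη : DisplacementLE η Q s) :
    ∀ᵐ z ∂((κ ∥ₖ η) ∘ₘ γ), ‖z.1 - z.2‖ ≤ D + (r + s) := by
  refine Measure.ae_comp_of_ae_ae (measurableSet_le (by fun_prop) measurable_const) ?_
  filter_upwards [hD, ae_fst_of_mem_couplings hγ hκ, ae_snd_of_mem_couplings hγ hη]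
    with p hp hp₁ hp₂
  rw [Kernel.parallelComp_apply]
  filter_upwards [Measure.quasiMeasurePreserving_fst.ae hp₁,
    Measure.quasiMeasurePreserving_snd.ae hp₂] with z hz₁ hz₂
  rw [show z.1 - z.2 = (p.1 - p.2) + ((z.1 - p.1) - (z.2 - p.2)) by abel]
  exact (norm_add_le _ _).trans (add_le_add hp ((norm_sub_le _ _).trans (add_le_add hz₁ hz₂)))

theorem W2sq_comp_le (hγ : γ ∈ Couplings P Q) (hD : ∀ᵐ p ∂γ, ‖p.1 - p.2‖ ≤ D)
    (hκ : DisplacementLE κ P r) (hη : DisplacementLE η Q s) :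
    W2sq (κ ∘ₘ P) (η ∘ₘ Q) ≤ ∫ p, ‖p.1 - p.2‖ ^ 2 ∂γ +
      2 * (correlation (drift κ) γ + correlation (drift η) (γ.map Prod.swap)) + (r + s) ^ 2 := by
  have := hγ.1
  have hcost := integrable_norm_sub_sq hD
  obtain ⟨hcorr, hcorr_eq⟩ := integrable_and_integral_inner_drift_sub hγ hD hκ hη
  have hsum : Integrable (fun p =>
      ‖p.1 - p.2‖ ^ 2 + 2 * ⟪p.1 - p.2, drift κ p.1 - drift η p.2⟫) γ :=
    hcost.add (hcorr.const_mul 2)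
  have hnew := integrable_norm_sub_sq (ae_parallelComp_comp_norm_sub_le hγ hD hκ hη)
  have hpointwise : ∀ᵐ p ∂γ, ∫ z, ‖z.1 - z.2‖ ^ 2 ∂((κ ∥ₖ η) p) ≤ ‖p.1 - p.2‖ ^ 2 +
      2 * ⟪p.1 - p.2, drift κ p.1 - drift η p.2⟫ + (r + s) ^ 2 := by
    filter_upwards [ae_fst_of_mem_couplings hγ hκ, ae_snd_of_mem_couplings hγ hη] with p hp₁ hp₂
    rw [Kernel.parallelComp_apply]
    exact integral_norm_sub_sq_prod_le hp₁ hp₂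
  calc W2sq (κ ∘ₘ P) (η ∘ₘ Q)
      ≤ ∫ z, ‖z.1 - z.2‖ ^ 2 ∂((κ ∥ₖ η) ∘ₘ γ) :=
        W2sq_le_of_mem_couplings (parallelComp_comp_mem_couplings hγ κ η)
    _ = ∫ p, ∫ z, ‖z.1 - z.2‖ ^ 2 ∂((κ ∥ₖ η) p) ∂γ := by
        rw [Measure.comp_eq_comp_const_apply] at hnew ⊢
        rw [Kernel.integral_comp hnew, Kernel.const_apply]
    _ ≤ ∫ p, (‖p.1 - p.2‖ ^ 2 + 2 * ⟪p.1 - p.2, drift κ p.1 - drift η p.2⟫ + (r + s) ^ 2) ∂γ :=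
        integral_mono_of_nonneg (ae_of_all _ fun _ => integral_nonneg fun _ => sq_nonneg _)
          (hsum.add (integrable_const _)) hpointwise
    _ = ∫ p, ‖p.1 - p.2‖ ^ 2 ∂γ +
          2 * (correlation (drift κ) γ + correlation (drift η) (γ.map Prod.swap)) +
          (r + s) ^ 2 := by
        rw [integral_add hsum (integrable_const _), integral_add hcost (hcorr.const_mul 2),
          integral_const_mul, hcorr_eq, integral_const, probReal_univ, one_smul]

end Perturbation

end Wasserstein

/-! ### The Metropolis kernel of an involution -/

section Metropolis

variable {X : Type*} {f : X → ℝ≥0} {S : X → X}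

/-- The Metropolis probability of accepting the move from `x` to `S x` for the target density `f`;
where `f x = 0` the junk value of the quotient makes it `0`. -/
def acceptance (f : X → ℝ≥0) (S : X → X) (x : X) : ℝ≥0 := min 1 (f (S x) / f x)

lemma acceptance_le_one (x : X) : acceptance f S x ≤ 1 := min_le_left _ _

lemma mul_acceptance (x : X) : f x * acceptance f S x = min (f x) (f (S x)) := by
  rcases eq_or_ne (f x) 0 with hx | hx
  · simp only [hx, zero_mul, zero_min]
  · rw [acceptance, mul_min, mul_one, mul_div_cancel₀ _ hx]

variable [MeasurableSpace X]

lemma measurable_acceptance (hf : Measurable f) (hS : Measurable S) :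
    Measurable (acceptance f S) :=
  measurable_const.min ((hf.comp hS).div hf)

/-- The Metropolis kernel with proposal `S` and target density `f`: move from `x` to `S x` with
probability `acceptance f S x` and stay at `x` otherwise. -/
def metropolisKernel (hf : Measurable f) (hS : Measurable S) : Kernel X X where
  toFun x := acceptance f S x • Measure.dirac (S x) + (1 - acceptance f S x) • Measure.dirac x
  measurable' := by
    have hacc := measurable_acceptance hf hS
    refine Measure.measurable_of_measurable_coe _ fun s hs => ?_
    have : Measurable (s.indicator 1 : X → ℝ≥0∞) := measurable_one.indicator hs
    simp only [Measure.add_apply, Measure.coe_nnreal_smul_apply, Measure.dirac_apply' _ hs]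
    fun_prop

lemma metropolisKernel_apply (hf : Measurable f) (hS : Measurable S) (x : X) :
    metropolisKernel hf hS x =
      acceptance f S x • Measure.dirac (S x) + (1 - acceptance f S x) • Measure.dirac x := rfl

instance isMarkovKernel_metropolisKernel (hf : Measurable f) (hS : Measurable S) :
    IsMarkovKernel (metropolisKernel hf hS) := by
  refine ⟨fun x => ⟨?_⟩⟩
  simp only [metropolisKernel_apply, Measure.add_apply, Measure.coe_nnreal_smul_apply,
    measure_univ, mul_one]
  exact_mod_cast add_tsub_cancel_of_le (acceptance_le_one x)

lemma mul_metropolisKernel_apply (hf : Measurable f) (hS : Measurable S) {s : Set X}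
    (hs : MeasurableSet s) (x : X) :
    (f x : ℝ≥0∞) * metropolisKernel hf hS x s =
      (min (f x) (f (S x)) : ℝ≥0) * s.indicator 1 (S x) +
        (f x - min (f x) (f (S x)) : ℝ≥0) * s.indicator 1 x := by
  simp only [metropolisKernel_apply, Measure.add_apply, Measure.coe_nnreal_smul_apply,
    Measure.dirac_apply' _ hs, mul_add, ← mul_assoc, ← ENNReal.coe_mul, mul_tsub, mul_one,
    mul_acceptance]

theorem invariant_metropolisKernel {m : Measure X} (hf : Measurable f)
    (hS : MeasurePreserving S m m) (hinv : Function.Involutive S) :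
    (metropolisKernel hf hS.measurable).Invariant (m.withDensity fun x => f x) := by
  have hSm := hS.measurable
  have : Measurable fun x => min (f x) (f (S x)) := hf.min (hf.comp hSm)
  ext s hs
  have : Measurable (s.indicator 1 : X → ℝ≥0∞) := measurable_one.indicator hs
  have hmoved : ∫⁻ x, (min (f x) (f (S x)) : ℝ≥0) * s.indicator 1 (S x) ∂m =
      ∫⁻ x, (min (f x) (f (S x)) : ℝ≥0) * s.indicator 1 x ∂m := by
    rw [← hS.lintegral_comp (by fun_prop)]
    simp only [hinv _, min_comm]
  rw [Measure.bind_apply hs (Kernel.aemeasurable _),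
    lintegral_withDensity_eq_lintegral_mul _ (by fun_prop) (Kernel.measurable_coe _ hs),
    withDensity_apply _ hs, ← lintegral_indicator hs]
  simp only [Pi.mul_apply, mul_metropolisKernel_apply hf hSm hs]
  rw [lintegral_add_right _ (by fun_prop), hmoved, ← lintegral_add_right _ (by fun_prop)]
  refine lintegral_congr fun x => ?_
  rw [← add_mul, ← ENNReal.coe_add, add_tsub_cancel_of_le (min_le_left _ _)]
  by_cases hx : x ∈ s <;> simp [hx]

end Metropolis

section MetropolisDrift

variable {E : Type*} [NormedAddCommGroup E] [MeasurableSpace E] [BorelSpace E]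
  {f : E → ℝ≥0} {S : E → E}

lemma displacementLE_metropolisKernel (hf : Measurable f) (hS : Measurable S) {r : ℝ}
    (hr : ∀ x, ‖S x - x‖ ≤ r) (P : Measure E) :
    DisplacementLE (metropolisKernel hf hS) P r := by
  refine ae_of_all _ fun x => ?_
  rw [metropolisKernel_apply, ae_add_measure_iff]
  refine ⟨Measure.ae_smul_measure ?_ _, Measure.ae_smul_measure ?_ _⟩
  · rw [ae_dirac_eq]
    exact hr x
  · rw [ae_dirac_eq]
    change ‖x - x‖ ≤ r
    rw [sub_self, norm_zero]
    exact (norm_nonneg _).trans (hr x)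

variable [NormedSpace ℝ E] [CompleteSpace E]

lemma drift_metropolisKernel (hf : Measurable f) (hS : Measurable S) (x : E) :
    drift (metropolisKernel hf hS) x = acceptance f S x • (S x - x) := by
  have hint : ∀ y, Integrable (fun x' => x' - x) (Measure.dirac y) :=
    fun y => integrable_dirac enorm_lt_top
  rw [drift, metropolisKernel_apply, integral_add_measure (hint _).smul_measure_nnreal
    (hint _).smul_measure_nnreal, integral_smul_nnreal_measure, integral_smul_nnreal_measure,
    integral_dirac, integral_dirac, sub_self, smul_zero, add_zero]

end MetropolisDrift

/-! ### Hölder densities on the unit cube -/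

section UnitCube

variable {d : ℕ} {x y : Euc d} {h : ℝ}

lemma norm_le_sqrt_mul_of_forall_abs_le {c : ℝ} (hc : 0 ≤ c) (hx : ∀ i, |x i| ≤ c) :
    ‖x‖ ≤ √d * c := by
  rw [EuclideanSpace.norm_eq]
  calc √(∑ i, ‖x i‖ ^ 2) ≤ √(∑ _i : Fin d, c ^ 2) := by
        gcongr with i
        exact hx i
    _ = √d * c := by
        rw [Finset.sum_const, Finset.card_univ, Fintype.card_fin, nsmul_eq_mul,
          Real.sqrt_mul (Nat.cast_nonneg d), Real.sqrt_sq hc]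

lemma measurableSet_unitCube (d : ℕ) : MeasurableSet (unitCube d) := by
  simp only [unitCube, Set.ofPred_forall]
  exact MeasurableSet.iInter fun i => measurableSet_Ioo.preimage (by fun_prop)

lemma norm_sub_le_of_mem_unitCube (hx : x ∈ unitCube d) (hy : y ∈ unitCube d) :
    ‖x - y‖ ≤ √d := by
  rw [← mul_one √(d : ℝ)]
  refine norm_le_sqrt_mul_of_forall_abs_le zero_le_one fun i => ?_
  rw [PiLp.sub_apply, abs_le]
  constructor <;> linarith [(hx i).1, (hx i).2, (hy i).1, (hy i).2]

/-- The points with some coordinate at distance at most `h` from the complement of `(0, 1)`. -/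
def boundaryLayer (d : ℕ) (h : ℝ) : Set (Euc d) := {x | ∃ i, x i ∉ Set.Ioo h (1 - h)}

lemma measurableSet_boundaryLayer (d : ℕ) (h : ℝ) : MeasurableSet (boundaryLayer d h) := by
  simp only [boundaryLayer, Set.ofPred_exists]
  exact MeasurableSet.iUnion fun i => measurableSet_Ioo.compl.preimage (by fun_prop)

lemma mem_unitCube_of_notMem_boundaryLayer (hx : x ∉ boundaryLayer d h)
    (hxy : ∀ i, |y i - x i| ≤ h) : y ∈ unitCube d := by
  intro i
  have hxi : x i ∈ Set.Ioo h (1 - h) := by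
    by_contra hxi
    exact hx ⟨i, hxi⟩
  have hyi := abs_le.1 (hxy i)
  exact ⟨by linarith [hxi.1, hyi.1], by linarith [hxi.2, hyi.2]⟩

lemma volume_slab_inter_unitCube_le (i : Fin d) (a b : ℝ) :
    volume ({x : Euc d | x i ∈ Set.Icc a b} ∩ unitCube d) ≤ ENNReal.ofReal (b - a) := by
  have hbox := (PiLp.volume_preserving_ofLp (Fin d)).measure_preimage
    (s := Set.univ.pi fun j => if j = i then Set.Icc a b else Set.Icc (0 : ℝ) 1)
    (MeasurableSet.univ_pi fun j => by split_ifs <;> exact measurableSet_Icc).nullMeasurableSet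
  refine (measure_mono ?_).trans (hbox.trans_le ?_)
  · rintro x ⟨hxi, hx⟩ j -
    dsimp only
    split_ifs with hj
    · subst hj; exact hxi
    · exact Set.Ioo_subset_Icc_self (hx j)
  · rw [volume_pi_pi]
    refine (Finset.prod_eq_single i (fun j _ hj => ?_) (by simp)).trans_le ?_
    · simp [hj]
    · simp

lemma volume_boundaryLayer_inter_unitCube_le (hh : 0 ≤ h) :
    volume (boundaryLayer d h ∩ unitCube d) ≤ ENNReal.ofReal (2 * d * h) := by
  have hcover : boundaryLayer d h ∩ unitCube d ⊆ ⋃ i, ({x : Euc d | x i ∈ Set.Icc 0 h} ∩ unitCube d)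
      ∪ ({x : Euc d | x i ∈ Set.Icc (1 - h) 1} ∩ unitCube d) := by
    rintro x ⟨⟨i, hi⟩, hx⟩
    rw [Set.mem_Ioo, not_and_or, not_lt, not_lt] at hi
    exact Set.mem_iUnion.2 ⟨i, hi.imp (fun hle => ⟨⟨(hx i).1.le, hle⟩, hx⟩)
      fun hle => ⟨⟨hle, (hx i).2.le⟩, hx⟩⟩
  calc volume (boundaryLayer d h ∩ unitCube d)
      ≤ ∑ _i : Fin d, (ENNReal.ofReal (h - 0) + ENNReal.ofReal (1 - (1 - h))) := by
        refine (measure_mono hcover).trans ((measure_iUnion_fintype_le _ _).trans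
          (Finset.sum_le_sum fun i _ => (measure_union_le _ _).trans ?_))
        gcongr <;> exact volume_slab_inter_unitCube_le i _ _
    _ = ENNReal.ofReal (2 * d * h) := by
        rw [sub_zero, sub_sub_cancel, ← ENNReal.ofReal_add hh hh, Finset.sum_const,
          Finset.card_univ, Fintype.card_fin, ← ENNReal.ofReal_nsmul, nsmul_eq_mul]
        congr 1
        ring

end UnitCube

/-- `f` is a density of `P` vanishing off the unit cube which, on the unit cube, takes values in
`[C⁻¹, C]` and is `α`-Hölder with constant `C`: one half of `IsControlled`, with the density
extended by zero. -/
structure IsHolderDensity {d : ℕ} (α C : ℝ) (P : Measure (Euc d)) (f : Euc d → ℝ≥0) : Prop where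
  pos : 0 < C
  measurable : Measurable f
  eq_withDensity : P = volume.withDensity fun x => f x
  eq_zero : ∀ x ∉ unitCube d, f x = 0
  inv_le : ∀ x ∈ unitCube d, C⁻¹ ≤ f x
  le : ∀ x ∈ unitCube d, f x ≤ C
  holder : ∀ x ∈ unitCube d, ∀ y ∈ unitCube d, |(f x : ℝ) - f y| ≤ C * ‖x - y‖ ^ α

lemma continuousOn_of_abs_sub_le_mul_rpow {E : Type*} [SeminormedAddCommGroup E] {s : Set E}
    {u : E → ℝ} {c α : ℝ} (hα : 0 < α)
    (hu : ∀ x ∈ s, ∀ y ∈ s, |u x - u y| ≤ c * ‖x - y‖ ^ α) : ContinuousOn u s := by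
  intro x hx
  have hbound : Continuous fun y => c * ‖y - x‖ ^ α :=
    continuous_const.mul ((continuous_id.sub continuous_const).norm.rpow_const
      fun _ => Or.inr hα.le)
  have hlim := hbound.tendsto x
  rw [sub_self, norm_zero, Real.zero_rpow hα.ne', mul_zero] at hlim
  refine tendsto_iff_dist_tendsto_zero.2 (squeeze_zero' (.of_forall fun _ => dist_nonneg) ?_
    (hlim.mono_left nhdsWithin_le_nhds))
  filter_upwards [self_mem_nhdsWithin] with y hy
  exact hu y hy x hx

/-- The relative oscillation over a cell of side `h` of an `α`-Hölder density between `C⁻¹` and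
`C`, plus the mass of the cells at the boundary, is at most `oscConst d α C * h ^ α`. -/
def oscConst (d : ℕ) (α C : ℝ) : ℝ := C ^ 2 * √d ^ α + 2 * d * C

namespace IsHolderDensity

variable {d : ℕ} {α C : ℝ} {P : Measure (Euc d)} {f : Euc d → ℝ≥0}

lemma of_restrict_withDensity (hα : 0 < α) (hC : 0 < C) {μ : Euc d → ℝ} {c : ℝ} (hcC : c ≤ C)
    (hP : P = (volume.restrict (unitCube d)).withDensity fun x => ENNReal.ofReal (μ x))
    (hμ : ∀ x ∈ unitCube d, ∀ y ∈ unitCube d, |μ x - μ y| ≤ c * ‖x - y‖ ^ α)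
    (hb : ∀ x ∈ unitCube d, C⁻¹ ≤ μ x ∧ μ x ≤ C) :
    IsHolderDensity α C P ((unitCube d).indicator fun x => (μ x).toNNReal) := by
  have hcube := measurableSet_unitCube d
  have hcoe : ∀ x ∈ unitCube d, ((μ x).toNNReal : ℝ) = μ x := fun x hx =>
    Real.coe_toNNReal _ ((inv_pos.2 hC).le.trans (hb x hx).1)
  refine ⟨hC, ?_, ?_, fun x hx => Set.indicator_of_notMem hx _, fun x hx => ?_, fun x hx => ?_,
    fun x hx y hy => ?_⟩
  · classical
    rw [← Set.piecewise_eq_indicator]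
    exact (continuous_real_toNNReal.comp_continuousOn
      (continuousOn_of_abs_sub_le_mul_rpow hα hμ)).measurable_piecewise continuousOn_const hcube
  · rw [hP, ← withDensity_indicator hcube]
    congr 1 with x
    by_cases hx : x ∈ unitCube d <;> simp [hx, ENNReal.ofReal]
  · rw [Set.indicator_of_mem hx, hcoe x hx]
    exact (hb x hx).1
  · rw [Set.indicator_of_mem hx, hcoe x hx]
    exact (hb x hx).2
  · rw [Set.indicator_of_mem hx, Set.indicator_of_mem hy, hcoe x hx, hcoe y hy]
    exact (hμ x hx y hy).trans (by gcongr)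

lemma ae_mem_unitCube (hf : IsHolderDensity α C P f) : ∀ᵐ x ∂P, x ∈ unitCube d := by
  rw [hf.eq_withDensity, ae_withDensity_iff hf.measurable.coe_nnreal_ennreal]
  refine ae_of_all _ fun x hx => ?_
  by_contra hxc
  exact hx (by rw [hf.eq_zero x hxc, ENNReal.coe_zero])

lemma measure_le (hf : IsHolderDensity α C P f) {s : Set (Euc d)} (hs : MeasurableSet s) :
    P s ≤ ENNReal.ofReal C * volume (s ∩ unitCube d) := by
  rw [← Measure.measure_inter_eq_of_ae hf.ae_mem_unitCube, Set.inter_comm s, hf.eq_withDensity,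
    withDensity_apply _ ((measurableSet_unitCube d).inter hs), ← setLIntegral_const]
  refine setLIntegral_mono measurable_const fun x hx => ?_
  rw [← ENNReal.ofReal_coe_nnreal]
  exact ENNReal.ofReal_le_ofReal (hf.le x hx.1)

lemma volume_le (hf : IsHolderDensity α C P f) {s : Set (Euc d)} (hs : MeasurableSet s)
    (hsc : s ⊆ unitCube d) : volume s ≤ ENNReal.ofReal C * P s := by
  rw [hf.eq_withDensity, withDensity_apply _ hs, ← setLIntegral_one,
    ← lintegral_const_mul _ hf.measurable.coe_nnreal_ennreal]
  refine setLIntegral_mono (hf.measurable.coe_nnreal_ennreal.const_mul _) fun x hx => ?_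
  rw [← ENNReal.ofReal_coe_nnreal, ← ENNReal.ofReal_mul hf.pos.le, ENNReal.one_le_ofReal,
    ← inv_le_iff_one_le_mul₀' hf.pos]
  exact hf.inv_le x (hsc hx)

lemma measureReal_boundaryLayer_le (hf : IsHolderDensity α C P f) {h : ℝ} (hh : 0 ≤ h) :
    P.real (boundaryLayer d h) ≤ 2 * d * C * h := by
  have hC := hf.pos
  refine ENNReal.toReal_le_of_le_ofReal (by positivity) ?_
  calc P (boundaryLayer d h)
      ≤ ENNReal.ofReal C * ENNReal.ofReal (2 * d * h) :=
        (hf.measure_le (measurableSet_boundaryLayer d h)).trans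
          (by gcongr; exact volume_boundaryLayer_inter_unitCube_le hh)
    _ = ENNReal.ofReal (2 * d * C * h) := by
        rw [← ENNReal.ofReal_mul hC.le]
        congr 1
        ring

lemma integral_le_oscConst_mul [IsProbabilityMeasure P] (hf : IsHolderDensity α C P f)
    (hα : α ≤ 1) {h : ℝ} (hh : 0 < h) (hh1 : h ≤ 1) {M : ℝ} (hM : 0 ≤ M) {F : Euc d → ℝ}
    (hF0 : ∀ x, 0 ≤ F x)
    (hF : ∀ᵐ x ∂P, F x ≤ M * (C ^ 2 * (√d * h) ^ α + (boundaryLayer d h).indicator 1 x)) :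
    ∫ x, F x ∂P ≤ M * (oscConst d α C * h ^ α) := by
  have hC := hf.pos
  have hlayer := measurableSet_boundaryLayer d h
  have hind : Integrable ((boundaryLayer d h).indicator (1 : Euc d → ℝ)) P :=
    (integrable_const (1 : ℝ)).indicator hlayer
  have hhα : h ≤ h ^ α := Real.self_le_rpow_of_le_one hh.le hh1 hα
  calc ∫ x, F x ∂P
      ≤ ∫ x, M * (C ^ 2 * (√d * h) ^ α + (boundaryLayer d h).indicator 1 x) ∂P :=
        integral_mono_of_nonneg (ae_of_all _ hF0)
          (((integrable_const _).add hind).const_mul M) hF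
    _ = M * (C ^ 2 * (√d * h) ^ α + P.real (boundaryLayer d h)) := by
        rw [integral_const_mul, integral_add (integrable_const _) hind, integral_const,
          probReal_univ, one_smul, integral_indicator_one hlayer]
    _ ≤ M * (C ^ 2 * (√d ^ α * h ^ α) + 2 * d * C * h ^ α) := by
        rw [Real.mul_rpow (Real.sqrt_nonneg _) hh.le]
        gcongr
        exact (hf.measureReal_boundaryLayer_le hh.le).trans (by gcongr)
    _ = M * (oscConst d α C * h ^ α) := by rw [oscConst]; ring

end IsHolderDensity

/-! ### Exchanging adjacent grid cells -/

section LineSwap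

/-- The involution of `ℝ` exchanging, for every integer `m`, the intervals
`[(2m-1)g, 2mg)` and `[2mg, (2m+1)g)` by translation. -/
def lineSwap (g x : ℝ) : ℝ := if Even ⌊x / g⌋ then x - g else x + g

variable {g : ℝ}

lemma measurableSet_even_floor_div (g : ℝ) : MeasurableSet {x : ℝ | Even ⌊x / g⌋} :=
  (measurable_id.div_const g).floor (MeasurableSet.of_discrete (s := {n : ℤ | Even n}))

lemma measurable_lineSwap (g : ℝ) : Measurable (lineSwap g) :=
  Measurable.ite (measurableSet_even_floor_div g) (by fun_prop) (by fun_prop)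

lemma even_floor_sub_div_iff (hg : g ≠ 0) (x : ℝ) :
    Even ⌊(x - g) / g⌋ ↔ ¬ Even ⌊x / g⌋ := by
  rw [sub_div, div_self hg, Int.floor_sub_one, Int.even_sub_one]

lemma even_floor_add_div_iff (hg : g ≠ 0) (x : ℝ) :
    Even ⌊(x + g) / g⌋ ↔ ¬ Even ⌊x / g⌋ := by
  rw [add_div, div_self hg, Int.floor_add_one, Int.even_add_one]

lemma lineSwap_involutive (hg : g ≠ 0) : Function.Involutive (lineSwap g) := by
  intro x
  by_cases hx : Even ⌊x / g⌋
  · simp [lineSwap, hx, even_floor_sub_div_iff hg]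
  · simp [lineSwap, hx, even_floor_add_div_iff hg]

lemma abs_lineSwap_sub (g x : ℝ) : |lineSwap g x - x| = |g| := by
  unfold lineSwap
  split_ifs <;> simp

lemma measurePreserving_lineSwap (hg : g ≠ 0) : MeasurePreserving (lineSwap g) := by
  refine ⟨measurable_lineSwap g, Measure.ext fun s hs => ?_⟩
  have hE := measurableSet_even_floor_div g
  rw [Measure.map_apply (measurable_lineSwap g) hs,
    ← measure_inter_add_sdiff (lineSwap g ⁻¹' s) hE, ← measure_inter_add_sdiff s hE, add_comm]
  congr 1
  · rw [← measure_preimage_add_right volume g (s ∩ _)]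
    congr 1 with x
    by_cases hx : Even ⌊x / g⌋
    · simp [lineSwap, hx, even_floor_add_div_iff hg]
    · simp [lineSwap, hx, even_floor_add_div_iff hg, Int.not_even_iff_odd.1 hx]
  · rw [← measure_preimage_add_right volume (-g) (s \ _)]
    congr 1 with x
    by_cases hx : Even ⌊x / g⌋ <;>
      simp [lineSwap, hx, ← sub_eq_add_neg, even_floor_sub_div_iff hg]

end LineSwap

section Grid

variable {d : ℕ} {g h : ℝ}

/-- `lineSwap` applied to every coordinate. -/
def cubeSwap (d : ℕ) (g : ℝ) (x : Euc d) : Euc d := WithLp.toLp 2 fun i => lineSwap g (x i)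

lemma cubeSwap_apply (x : Euc d) (i : Fin d) : cubeSwap d g x i = lineSwap g (x i) := rfl

lemma measurePreserving_cubeSwap (hg : g ≠ 0) : MeasurePreserving (cubeSwap d g) :=
  (PiLp.volume_preserving_toLp (Fin d)).comp
    ((volume_preserving_pi fun _ => measurePreserving_lineSwap hg).comp
      (PiLp.volume_preserving_ofLp (Fin d)))

lemma cubeSwap_involutive (hg : g ≠ 0) : Function.Involutive (cubeSwap d g) := by
  intro x
  ext i
  exact lineSwap_involutive hg (x i)

lemma abs_cubeSwap_sub_apply (hg : 0 ≤ g) (x : Euc d) (i : Fin d) :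
    |cubeSwap d g x i - x i| = g := by
  rw [cubeSwap_apply, abs_lineSwap_sub, abs_of_nonneg hg]

lemma norm_cubeSwap_sub_le (hg : 0 ≤ g) (x : Euc d) : ‖cubeSwap d g x - x‖ ≤ √d * g :=
  norm_le_sqrt_mul_of_forall_abs_le hg fun i => (abs_cubeSwap_sub_apply hg x i).le

lemma gridSnap_apply (h : ℝ) (x : Euc d) (i : Fin d) :
    gridSnap d h x i = h * ⌊x i / h⌋ + h / 2 := rfl

lemma measurable_gridSnap (h : ℝ) : Measurable (gridSnap d h) := by
  refine (WithLp.measurable_toLp 2 _).comp (measurable_pi_lambda _ fun i => ?_)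
  have : Measurable fun x : Euc d => ⌊x i / h⌋ := Measurable.floor (by fun_prop)
  fun_prop

lemma abs_gridSnap_sub_apply_le (hh : 0 < h) (x : Euc d) (i : Fin d) :
    |gridSnap d h x i - x i| ≤ h / 2 := by
  have hlo := Int.floor_le (x i / h)
  have hhi := Int.lt_floor_add_one (x i / h)
  rw [le_div_iff₀ hh] at hlo
  rw [div_lt_iff₀ hh] at hhi
  rw [gridSnap_apply, abs_le]
  constructor <;> linarith

lemma norm_gridSnap_sub_le (hh : 0 < h) (x : Euc d) : ‖gridSnap d h x - x‖ ≤ √d * h :=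
  norm_le_sqrt_mul_of_forall_abs_le hh.le fun i =>
    (abs_gridSnap_sub_apply_le hh x i).trans (half_le_self hh.le)

lemma floor_div_two_mul (x g : ℝ) : ⌊x / (2 * g)⌋ = ⌊x / g⌋ / 2 := by
  rw [mul_comm, ← div_div]
  exact_mod_cast Int.floor_div_natCast (x / g) 2

lemma gridSnap_sub_gridSnap_two_mul (x : Euc d) :
    gridSnap d g x - gridSnap d (2 * g) x = (1 / 2 : ℝ) • (cubeSwap d g x - x) := by
  ext i
  simp only [PiLp.sub_apply, PiLp.smul_apply, gridSnap_apply, cubeSwap_apply, smul_eq_mul,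
    floor_div_two_mul, lineSwap]
  rcases Int.even_or_odd' ⌊x i / g⌋ with ⟨m, hm | hm⟩
  · rw [hm, if_pos (even_two_mul m), Int.mul_ediv_cancel_left _ two_ne_zero]
    push_cast; ring
  · rw [hm, if_neg (Int.not_even_iff_odd.2 ⟨m, rfl⟩), show (2 * m + 1) / 2 = m by omega]
    push_cast; ring

end Grid

namespace IsHolderDensity

variable {d : ℕ} {α C h : ℝ} {P : Measure (Euc d)} {f : Euc d → ℝ≥0}

lemma one_sub_acceptance_le (hf : IsHolderDensity α C P f) (hα : 0 ≤ α) (hh : 0 ≤ h)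
    {S : Euc d → Euc d} (hS : ∀ x i, |S x i - x i| ≤ h) {x : Euc d} (hx : x ∈ unitCube d) :
    1 - (acceptance f S x : ℝ) ≤
      C ^ 2 * (√d * h) ^ α + (boundaryLayer d h).indicator 1 x := by
  have hC := hf.pos
  by_cases hxb : x ∈ boundaryLayer d h
  · rw [Set.indicator_of_mem hxb, Pi.one_apply]
    have : 0 ≤ C ^ 2 * (√d * h) ^ α := by positivity
    linarith [(acceptance f S x).coe_nonneg]
  rw [Set.indicator_of_notMem hxb, add_zero]
  have hSx : S x ∈ unitCube d := mem_unitCube_of_notMem_boundaryLayer hxb (hS x)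
  have hnorm : ‖x - S x‖ ≤ √d * h := by
    rw [norm_sub_rev]
    exact norm_le_sqrt_mul_of_forall_abs_le hh (hS x)
  have ha : (f x : ℝ) * acceptance f S x = min (f x : ℝ) (f (S x)) := by
    exact_mod_cast mul_acceptance x
  have ha1 : (acceptance f S x : ℝ) ≤ 1 := acceptance_le_one x
  have hdiff : (f x : ℝ) - min (f x : ℝ) (f (S x)) ≤ C * (√d * h) ^ α := by
    calc (f x : ℝ) - min (f x : ℝ) (f (S x)) ≤ |(f x : ℝ) - f (S x)| := by
          rcases min_cases (f x : ℝ) (f (S x)) with hmin | hmin <;> rw [hmin.1]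
          · simp
          · exact le_abs_self _
      _ ≤ C * ‖x - S x‖ ^ α := hf.holder x hx (S x) hSx
      _ ≤ C * (√d * h) ^ α := by gcongr
  have hlow : C⁻¹ * (1 - acceptance f S x) ≤ C * (√d * h) ^ α :=
    calc C⁻¹ * (1 - acceptance f S x) ≤ f x * (1 - acceptance f S x) :=
          mul_le_mul_of_nonneg_right (hf.inv_le x hx) (sub_nonneg.2 ha1)
      _ = f x - min (f x : ℝ) (f (S x)) := by rw [mul_sub, mul_one, ha]
      _ ≤ C * (√d * h) ^ α := hdiff
  rw [inv_mul_le_iff₀ hC] at hlow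
  linarith

end IsHolderDensity

/-! ### Snapping a near-optimal coupling -/

lemma sq_le_rpow_one_add {t α : ℝ} (ht : 0 < t) (ht1 : t ≤ 1) (hα : α ≤ 1) :
    t ^ 2 ≤ t ^ (1 + α) := by
  rw [← Real.rpow_natCast]
  exact Real.rpow_le_rpow_of_exponent_ge ht ht1 (by push_cast; linarith)

lemma add_sqrt_mul_sq_le_rpow (d : ℕ) {h α : ℝ} (hh : 0 < h) (hh1 : h ≤ 1) (hα : α ≤ 1) :
    (√d * h + √d * h) ^ 2 ≤ 4 * d * h ^ (1 + α) := by
  calc (√d * h + √d * h) ^ 2 = 4 * √d ^ 2 * h ^ 2 := by ring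
    _ ≤ 4 * d * h ^ (1 + α) := by
        rw [Real.sq_sqrt (Nat.cast_nonneg d)]
        gcongr
        exact sq_le_rpow_one_add hh hh1 hα

section UpperBound

variable {d : ℕ} {α C g h ε : ℝ} {P Q : Measure (Euc d)} {γ : Measure (Euc d × Euc d)}
  {f : Euc d → ℝ≥0}

lemma ae_norm_sub_le_sqrt (hγ : γ ∈ Couplings P Q) (hP : ∀ᵐ x ∂P, x ∈ unitCube d)
    (hQ : ∀ᵐ y ∂Q, y ∈ unitCube d) : ∀ᵐ p ∂γ, ‖p.1 - p.2‖ ≤ √d := by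
  filter_upwards [ae_fst_of_mem_couplings hγ hP, ae_snd_of_mem_couplings hγ hQ] with p hp₁ hp₂
  exact norm_sub_le_of_mem_unitCube hp₁ hp₂

theorem neg_le_correlation_drift_of_invariant (hγ : γ ∈ Couplings P Q)
    (hopt : ∫ p, ‖p.1 - p.2‖ ^ 2 ∂γ ≤ W2sq P Q + ε) {D r : ℝ}
    (hD : ∀ᵐ p ∂γ, ‖p.1 - p.2‖ ≤ D) {κ : Kernel (Euc d) (Euc d)} [IsMarkovKernel κ]
    (hκ : DisplacementLE κ P r) (hinv : κ.Invariant P) :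
    -((ε + r ^ 2) / 2) ≤ correlation (drift κ) γ := by
  have hid : DisplacementLE Kernel.id Q 0 := ae_of_all _ fun y => by
    rw [Kernel.id_apply, ae_dirac_eq]
    exact (norm_eq_zero.2 (sub_self y)).le
  have hcomp := W2sq_comp_le hγ hD hκ hid
  rw [hinv.def, Measure.id_comp, show drift (Kernel.id : Kernel (Euc d) (Euc d)) = fun _ => 0 from
    funext drift_id, correlation_zero] at hcomp
  linarith

theorem neg_le_correlation_of_invariant [IsProbabilityMeasure P] (hγ : γ ∈ Couplings P Q)
    (hopt : ∫ p, ‖p.1 - p.2‖ ^ 2 ∂γ ≤ W2sq P Q + ε) {D r M : ℝ}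
    (hD : ∀ᵐ p ∂γ, ‖p.1 - p.2‖ ≤ D) {κ : Kernel (Euc d) (Euc d)} [IsMarkovKernel κ]
    (hκ : DisplacementLE κ P r) (hinv : κ.Invariant P) {u : Euc d → Euc d} (hu : Measurable u)
    (hM : ∀ᵐ x ∂P, ‖u x‖ ≤ M) :
    -((ε + r ^ 2) / 2 + D * ∫ x, ‖u x - drift κ x‖ ∂P) ≤ correlation u γ := by
  have := hγ.1
  have hκm := measurable_drift κ
  have hdrift : ∀ᵐ x ∂P, ‖drift κ x‖ ≤ r := hκ.mono fun _ => norm_drift_le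
  have hrest : Integrable (fun x => u x - drift κ x) P :=
    (Integrable.of_bound hu.aestronglyMeasurable M hM).sub
      (.of_bound hκm.aestronglyMeasurable r hdrift)
  have hopt_drift := neg_le_correlation_drift_of_invariant hγ hopt hD hκ hinv
  have hrest_corr := (abs_le.1 (abs_correlation_le hγ hD hrest)).1
  rw [correlation_sub hD hu (ae_fst_of_mem_couplings hγ hM) hκm
    (ae_fst_of_mem_couplings hγ hdrift)] at hrest_corr
  linarith

/-- In the first-order optimality condition of a coupling, exchanging neighbouring cells of side
`g` costs at most `swapConst d α C * g ^ (1 + α)`. -/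
def swapConst (d : ℕ) (α C : ℝ) : ℝ := d * (1 + oscConst d α C)

lemma oscConst_nonneg (hC : 0 ≤ C) : 0 ≤ oscConst d α C := by
  unfold oscConst
  positivity

lemma swapConst_nonneg (hC : 0 ≤ C) : 0 ≤ swapConst d α C :=
  mul_nonneg (Nat.cast_nonneg d) (add_nonneg zero_le_one (oscConst_nonneg hC))

namespace IsHolderDensity

lemma integral_norm_sub_drift_metropolisKernel_le [IsProbabilityMeasure P]
    (hf : IsHolderDensity α C P f) (hα0 : 0 ≤ α) (hα1 : α ≤ 1) (hg : 0 < g) (hg1 : g ≤ 1)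
    (hS : Measurable (cubeSwap d g)) :
    ∫ x, ‖(cubeSwap d g x - x) - drift (metropolisKernel hf.measurable hS) x‖ ∂P ≤
      √d * g * (oscConst d α C * g ^ α) := by
  refine hf.integral_le_oscConst_mul hα1 hg hg1 (by positivity) (fun x => norm_nonneg _) ?_
  filter_upwards [hf.ae_mem_unitCube] with x hx
  have hacc : 0 ≤ 1 - (acceptance f (cubeSwap d g) x : ℝ) :=
    sub_nonneg.2 (acceptance_le_one x)
  have hrej : (cubeSwap d g x - x) - drift (metropolisKernel hf.measurable hS) x =
      (1 - (acceptance f (cubeSwap d g) x : ℝ)) • (cubeSwap d g x - x) := by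
    rw [drift_metropolisKernel, sub_smul, one_smul, NNReal.smul_def]
  rw [hrej, norm_smul, Real.norm_of_nonneg hacc, mul_comm]
  exact mul_le_mul (norm_cubeSwap_sub_le hg.le x)
    (hf.one_sub_acceptance_le hα0 hg.le (fun x i => (abs_cubeSwap_sub_apply hg.le x i).le) hx)
    hacc (by positivity)

lemma neg_le_correlation_cubeSwap_sub [IsProbabilityMeasure P]
    (hf : IsHolderDensity α C P f) (hα0 : 0 ≤ α) (hα1 : α ≤ 1) (hQ : ∀ᵐ y ∂Q, y ∈ unitCube d)
    (hγ : γ ∈ Couplings P Q) (hopt : ∫ p, ‖p.1 - p.2‖ ^ 2 ∂γ ≤ W2sq P Q + ε)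
    (hg : 0 < g) (hg1 : g ≤ 1) :
    -(ε / 2 + swapConst d α C * g ^ (1 + α)) ≤ correlation (fun x => cubeSwap d g x - x) γ := by
  have hS : MeasurePreserving (cubeSwap d g) := measurePreserving_cubeSwap hg.ne'
  have hSr : ∀ x, ‖cubeSwap d g x - x‖ ≤ √d * g := norm_cubeSwap_sub_le hg.le
  have hinv := invariant_metropolisKernel hf.measurable hS (cubeSwap_involutive hg.ne')
  rw [← hf.eq_withDensity] at hinv
  have hopt' := neg_le_correlation_of_invariant hγ hopt
    (ae_norm_sub_le_sqrt hγ hf.ae_mem_unitCube hQ)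
    (displacementLE_metropolisKernel hf.measurable hS.measurable hSr P) hinv
    (hS.measurable.sub measurable_id) (ae_of_all _ hSr)
  refine le_trans (neg_le_neg ?_) hopt'
  have hdd : √(d : ℝ) * √d = d := Real.mul_self_sqrt (Nat.cast_nonneg d)
  calc (ε + (√d * g) ^ 2) / 2 + √d * ∫ x, ‖(cubeSwap d g x - x) -
        drift (metropolisKernel hf.measurable hS.measurable) x‖ ∂P
      ≤ (ε + (√d * g) ^ 2) / 2 + √d * (√d * g * (oscConst d α C * g ^ α)) := by
        gcongr
        exact hf.integral_norm_sub_drift_metropolisKernel_le hα0 hα1 hg hg1 hS.measurable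
    _ = ε / 2 + (d * g ^ 2 / 2 + d * oscConst d α C * g ^ (1 + α)) := by
        rw [Real.rpow_add hg, Real.rpow_one, mul_pow, sq √(d : ℝ), hdd]
        linear_combination g * oscConst d α C * g ^ α * hdd
    _ ≤ ε / 2 + (d * g ^ (1 + α) + d * oscConst d α C * g ^ (1 + α)) := by
        have hsq := sq_le_rpow_one_add hg hg1 hα1
        gcongr
        exact (half_le_self (by positivity)).trans (by gcongr)
    _ = ε / 2 + swapConst d α C * g ^ (1 + α) := by rw [swapConst]; ring

lemma correlation_gridSnap_two_mul_sub_le [IsProbabilityMeasure P]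
    (hf : IsHolderDensity α C P f) (hα0 : 0 ≤ α) (hα1 : α ≤ 1) (hQ : ∀ᵐ y ∂Q, y ∈ unitCube d)
    (hγ : γ ∈ Couplings P Q) (hopt : ∫ p, ‖p.1 - p.2‖ ^ 2 ∂γ ≤ W2sq P Q + ε)
    (hg : 0 < g) (hg1 : g ≤ 1) :
    correlation (fun x => gridSnap d (2 * g) x - x) γ ≤
      correlation (fun x => gridSnap d g x - x) γ + ε / 4 +
        swapConst d α C / 2 * g ^ (1 + α) := by
  have := hγ.1
  have hS : MeasurePreserving (cubeSwap d g) := measurePreserving_cubeSwap hg.ne'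
  have hsplit : (fun x => gridSnap d (2 * g) x - x) =
      fun x => (gridSnap d g x - x) - (1 / 2 : ℝ) • (cubeSwap d g x - x) := by
    funext x
    rw [← gridSnap_sub_gridSnap_two_mul]
    abel
  have hsnap_meas : Measurable fun x => gridSnap d g x - x :=
    (measurable_gridSnap g).sub measurable_id
  have hswap_meas : Measurable fun x => (1 / 2 : ℝ) • (cubeSwap d g x - x) :=
    (hS.measurable.sub measurable_id).const_smul (1 / 2 : ℝ)
  have hswap_le : ∀ x : Euc d, ‖(1 / 2 : ℝ) • (cubeSwap d g x - x)‖ ≤ 1 / 2 * (√d * g) := by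
    intro x
    rw [norm_smul, Real.norm_of_nonneg one_half_pos.le]
    gcongr
    exact norm_cubeSwap_sub_le hg.le x
  rw [hsplit, correlation_sub (ae_norm_sub_le_sqrt hγ hf.ae_mem_unitCube hQ) hsnap_meas
    (ae_of_all _ fun p => norm_gridSnap_sub_le hg p.1) hswap_meas
    (ae_of_all _ fun p => hswap_le p.1), correlation_smul]
  linarith [hf.neg_le_correlation_cubeSwap_sub hα0 hα1 hQ hγ hopt hg hg1]

lemma correlation_gridSnap_sub_le_refine [IsProbabilityMeasure P]
    (hf : IsHolderDensity α C P f) (hα0 : 0 ≤ α) (hα1 : α ≤ 1) (hQ : ∀ᵐ y ∂Q, y ∈ unitCube d)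
    (hγ : γ ∈ Couplings P Q) (hopt : ∫ p, ‖p.1 - p.2‖ ^ 2 ∂γ ≤ W2sq P Q + ε)
    (hh : 0 < h) (hh1 : h ≤ 1) (J : ℕ) :
    correlation (fun x => gridSnap d h x - x) γ ≤
      correlation (fun x => gridSnap d (h / 2 ^ J) x - x) γ + J * (ε / 4) +
        swapConst d α C / 2 * h ^ (1 + α) := by
  have hK : 0 ≤ swapConst d α C := swapConst_nonneg hf.pos.le
  induction J generalizing h with
  | zero =>
    have : 0 ≤ swapConst d α C / 2 * h ^ (1 + α) := by positivity
    simpa using this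
  | succ J ih =>
    have hcoarse := hf.correlation_gridSnap_two_mul_sub_le hα0 hα1 hQ hγ hopt (half_pos hh)
      (by linarith)
    have hfine := ih (half_pos hh) (by linarith)
    rw [mul_div_cancel₀ h two_ne_zero] at hcoarse
    rw [div_div, ← pow_succ'] at hfine
    have hpow : (h / 2) ^ (1 + α) ≤ h ^ (1 + α) / 2 := by
      rw [Real.div_rpow hh.le zero_le_two]
      gcongr
      exact Real.self_le_rpow_of_one_le one_le_two (by linarith)
    have hpow' := mul_le_mul_of_nonneg_left hpow hK
    push_cast
    linarith

lemma correlation_gridSnap_sub_le [IsProbabilityMeasure P]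
    (hf : IsHolderDensity α C P f) (hα0 : 0 ≤ α) (hα1 : α ≤ 1) (hQ : ∀ᵐ y ∂Q, y ∈ unitCube d)
    (hγ : γ ∈ Couplings P Q) (hh : 0 < h) (hh1 : h ≤ 1) {J : ℕ} (hJ : 1 / 2 ^ J ≤ h)
    (hopt : ∫ p, ‖p.1 - p.2‖ ^ 2 ∂γ ≤ W2sq P Q + h ^ 2 / (J + 1)) :
    correlation (fun x => gridSnap d h x - x) γ ≤
      (d + 1 / 4 + swapConst d α C / 2) * h ^ (1 + α) := by
  have hfine : correlation (fun x => gridSnap d (h / 2 ^ J) x - x) γ ≤ d * h ^ 2 := by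
    have := hγ.1
    have hscale : 0 < h / 2 ^ J := by positivity
    have hmeas := (measurable_gridSnap (h / 2 ^ J)).sub (measurable_id (α := Euc d))
    have hbound : ∀ x : Euc d, ‖gridSnap d (h / 2 ^ J) x - x‖ ≤ √d * (h / 2 ^ J) :=
      norm_gridSnap_sub_le hscale
    calc correlation (fun x => gridSnap d (h / 2 ^ J) x - x) γ
        ≤ √d * ∫ x, ‖gridSnap d (h / 2 ^ J) x - x‖ ∂P :=
          (le_abs_self _).trans (abs_correlation_le hγ
            (ae_norm_sub_le_sqrt hγ hf.ae_mem_unitCube hQ)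
            (.of_bound hmeas.aestronglyMeasurable _ (ae_of_all _ hbound)))
      _ ≤ √d * (√d * (h / 2 ^ J)) := by
          gcongr
          simpa using integral_mono_of_nonneg (μ := P) (ae_of_all _ fun x => norm_nonneg _)
            (integrable_const _) (ae_of_all _ hbound)
      _ = d * (h * (1 / 2 ^ J)) := by
          rw [← mul_assoc, Real.mul_self_sqrt (Nat.cast_nonneg d), mul_one_div]
      _ ≤ d * h ^ 2 := by rw [sq]; gcongr
  have hsum : J * (h ^ 2 / (J + 1) / 4) ≤ h ^ 2 / 4 := by
    rw [← mul_div_assoc, mul_div_left_comm]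
    gcongr
    exact mul_le_of_le_one_right (by positivity) (div_le_one_of_le₀ (by simp) (by positivity))
  have hsq := sq_le_rpow_one_add hh hh1 hα1
  calc correlation (fun x => gridSnap d h x - x) γ
      ≤ d * h ^ 2 + h ^ 2 / 4 + swapConst d α C / 2 * h ^ (1 + α) := by
        linarith [hf.correlation_gridSnap_sub_le_refine hα0 hα1 hQ hγ hopt hh hh1 J]
    _ ≤ d * h ^ (1 + α) + h ^ (1 + α) / 4 + swapConst d α C / 2 * h ^ (1 + α) := by gcongr
    _ = (d + 1 / 4 + swapConst d α C / 2) * h ^ (1 + α) := by ring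

theorem W2sq_map_gridSnap_le [IsProbabilityMeasure P] [IsProbabilityMeasure Q]
    (hf : IsHolderDensity α C P f) {f' : Euc d → ℝ≥0} (hf' : IsHolderDensity α C Q f')
    (hα0 : 0 ≤ α) (hα1 : α ≤ 1) (hh : 0 < h) (hh1 : h ≤ 1) :
    W2sq (P.map (gridSnap d h)) (Q.map (gridSnap d h)) ≤
      W2sq P Q + (8 * d + 2 + 2 * swapConst d α C) * h ^ (1 + α) := by
  obtain ⟨J, hJ⟩ := exists_pow_lt_of_lt_one hh one_half_lt_one
  rw [one_div_pow] at hJ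
  -- The excess cost of the coupling is paid at each of the `J` dyadic scales.
  have hε : 0 < h ^ 2 / (J + 1 : ℝ) := by positivity
  obtain ⟨γ, hγ, hopt⟩ := exists_mem_couplings_integral_le (P := P) (Q := Q) hε
  have hopt' : ∫ p, ‖p.1 - p.2‖ ^ 2 ∂(γ.map Prod.swap) ≤ W2sq Q P + h ^ 2 / (J + 1) := by
    rwa [integral_norm_sub_sq_map_swap, W2sq_comm]
  have hP := hf.correlation_gridSnap_sub_le hα0 hα1 hf'.ae_mem_unitCube hγ hh hh1 hJ.le hopt
  have hQ := hf'.correlation_gridSnap_sub_le hα0 hα1 hf.ae_mem_unitCube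
    (map_swap_mem_couplings hγ) hh hh1 hJ.le hopt'
  have hG := measurable_gridSnap (d := d) h
  have hdisp : ∀ R : Measure (Euc d),
      DisplacementLE (Kernel.deterministic (gridSnap d h) hG) R (√d * h) := fun R =>
    ae_of_all _ fun x => by
      rw [Kernel.deterministic_apply, ae_dirac_eq]
      exact norm_gridSnap_sub_le hh x
  have hcomp := W2sq_comp_le hγ (ae_norm_sub_le_sqrt hγ hf.ae_mem_unitCube hf'.ae_mem_unitCube)
    (hdisp P) (hdisp Q)
  rw [Measure.deterministic_comp_eq_map, Measure.deterministic_comp_eq_map,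
    funext (drift_deterministic hG)] at hcomp
  have hr := add_sqrt_mul_sq_le_rpow d hh hh1 hα1
  have hεle : h ^ 2 / (J + 1 : ℝ) ≤ h ^ (1 + α) :=
    (div_le_self (sq_nonneg h) (by simp)).trans (sq_le_rpow_one_add hh hh1 hα1)
  linarith

end IsHolderDensity

end UpperBound

/-! ### Spreading cell centres over their cells -/

lemma setIntegral_sub_eq_zero_of_ae_symmetric {E : Type*} [NormedAddCommGroup E]
    [NormedSpace ℝ E] [MeasurableSpace E] [BorelSpace E] {m : Measure E} [m.IsAddLeftInvariant]
    [m.IsNegInvariant] {s : Set E} (hs : MeasurableSet s) {a : E}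
    (hsymm : ∀ᵐ x ∂m, a + a - x ∈ s ↔ x ∈ s) : ∫ x in s, (x - a) ∂m = 0 := by
  have : IsAddTorsionFree E := .of_isTorsionFree ℝ E
  set F := s.indicator fun x => x - a
  have hodd : ∀ᵐ x ∂m, F (a + a - x) = -F x := by
    filter_upwards [hsymm] with x hx
    by_cases hxs : x ∈ s
    · simp only [F, Set.indicator_of_mem (hx.2 hxs), Set.indicator_of_mem hxs]
      abel
    · simp only [F, Set.indicator_of_notMem (mt hx.1 hxs), Set.indicator_of_notMem hxs, neg_zero]
  have hneg : ∫ x, F x ∂m = -∫ x, F x ∂m := by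
    rw [← integral_neg, ← integral_congr_ae hodd, integral_sub_left_eq_self]
  rw [← integral_indicator hs]
  exact self_eq_neg.1 hneg

section CondDistrib

variable {X Y : Type*} [MeasurableSpace X] [MeasurableSpace Y] [MeasurableSingletonClass Y]
  {P : Measure X} {φ : X → Y}

lemma ae_map_singleton_ne_zero (hφ : Measurable φ) (hc : (Set.range φ).Countable) :
    ∀ᵐ y ∂(P.map φ), P.map φ {y} ≠ 0 := by
  have hrange : ∀ᵐ y ∂(P.map φ), y ∈ Set.range φ :=
    (ae_map_iff hφ.aemeasurable hc.measurableSet).2 (ae_of_all _ fun x => ⟨x, rfl⟩)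
  have hnull : P.map φ {y ∈ Set.range φ | P.map φ {y} = 0} = 0 :=
    (measure_null_iff_singleton (hc.mono (Set.sep_subset _ _))).2 fun y hy => hy.2
  filter_upwards [hrange, measure_eq_zero_iff_ae_notMem.1 hnull] with y hy hy_atom hy_zero
  exact hy_atom ⟨hy, hy_zero⟩

lemma condDistrib_id_eq_cond [StandardBorelSpace X] [Nonempty X] [IsFiniteMeasure P]
    (hφ : Measurable φ) {y : Y} (hy : P.map φ {y} ≠ 0) :
    condDistrib id φ P y = cond P (φ ⁻¹' {y}) := by
  ext s hs
  have hy_meas := measurableSet_singleton y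
  rw [condDistrib_apply_of_ne_zero measurable_id y hy, cond_apply (hφ hy_meas),
    Measure.map_apply hφ hy_meas, Measure.map_apply (hφ.prodMk measurable_id) (hy_meas.prod hs)]
  rfl

end CondDistrib

section GridCells

variable {d : ℕ} {h : ℝ}

lemma countable_range_gridSnap (d : ℕ) (h : ℝ) : (Set.range (gridSnap d h)).Countable := by
  refine (Set.countable_range fun k : Fin d → ℤ =>
    (EuclideanSpace.equiv (Fin d) ℝ).symm fun i => h * k i + h / 2).mono ?_
  rintro _ ⟨x, rfl⟩
  exact ⟨fun i => ⌊x i / h⌋, rfl⟩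

lemma gridSnap_eq_gridSnap_iff (hh : 0 < h) {x y : Euc d} :
    gridSnap d h x = gridSnap d h y ↔
      ∀ i, x i ∈ Set.Ico (gridSnap d h y i - h / 2) (gridSnap d h y i + h / 2) := by
  rw [PiLp.ext_iff]
  refine forall_congr' fun i => ?_
  rw [gridSnap_apply, gridSnap_apply, add_left_inj, mul_right_inj' hh.ne', Int.cast_inj,
    Int.floor_eq_iff, le_div_iff₀ hh, div_lt_iff₀ hh, Set.mem_Ico]
  ring_nf

lemma ae_forall_apply_ne (c : Euc d) : ∀ᵐ x : Euc d, ∀ i, x i ≠ c i := by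
  refine ae_all_iff.2 fun i => ?_
  exact ((Measure.quasiMeasurePreserving_eval (fun _ : Fin d => (volume : Measure ℝ)) i).comp
    (PiLp.volume_preserving_ofLp (Fin d)).quasiMeasurePreserving).ae (Measure.ae_ne _ (c i))

lemma setIntegral_sub_gridSnap_eq_zero (hh : 0 < h) (y : Euc d) :
    ∫ x in gridSnap d h ⁻¹' {gridSnap d h y}, (x - gridSnap d h y) = 0 := by
  refine setIntegral_sub_eq_zero_of_ae_symmetric
    (measurable_gridSnap h (measurableSet_singleton _)) ?_
  filter_upwards [ae_forall_apply_ne (WithLp.toLp 2 fun i => gridSnap d h y i - h / 2),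
    ae_forall_apply_ne (WithLp.toLp 2 fun i => gridSnap d h y i + h / 2)] with x hlo hhi
  simp only [Set.mem_preimage, Set.mem_singleton_iff, gridSnap_eq_gridSnap_iff hh]
  refine forall_congr' fun i => ?_
  have hlo' : x i ≠ gridSnap d h y i - h / 2 := hlo i
  have hhi' : x i ≠ gridSnap d h y i + h / 2 := hhi i
  simp only [PiLp.sub_apply, PiLp.add_apply, Set.mem_Ico]
  constructor <;> rintro ⟨hle, hlt⟩
  · exact ⟨by linarith, lt_of_le_of_ne (by linarith) hhi'⟩
  · exact ⟨by linarith, by linarith [lt_of_le_of_ne hle hlo'.symm]⟩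

lemma abs_sub_le_of_gridSnap_eq (hh : 0 < h) {x y : Euc d}
    (hxy : gridSnap d h x = gridSnap d h y) (i : Fin d) : |x i - y i| ≤ h := by
  have hx := abs_le.1 (abs_gridSnap_sub_apply_le hh x i)
  have hy := abs_le.1 (abs_gridSnap_sub_apply_le hh y i)
  rw [hxy] at hx
  exact abs_le.2 ⟨by linarith [hx.2, hy.1], by linarith [hx.1, hy.2]⟩

end GridCells

section LowerBound

variable {d : ℕ} {α C h : ℝ} {P Q : Measure (Euc d)} {f : Euc d → ℝ≥0}

/-- The kernel sending the centre `a` of a cell to the law `P` conditioned on that cell. -/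
abbrev cellKernel (P : Measure (Euc d)) [IsFiniteMeasure P] (h : ℝ) : Kernel (Euc d) (Euc d) :=
  condDistrib id (gridSnap d h) P

lemma cellKernel_comp_map_gridSnap [IsFiniteMeasure P] (h : ℝ) :
    cellKernel P h ∘ₘ P.map (gridSnap d h) = P := by
  rw [condDistrib_comp_map (measurable_gridSnap h).aemeasurable aemeasurable_id, Measure.map_id]

lemma displacementLE_cellKernel [IsFiniteMeasure P] (hh : 0 < h) :
    DisplacementLE (cellKernel P h) (P.map (gridSnap d h)) (√d * h) := by
  have hG := measurable_gridSnap (d := d) h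
  filter_upwards [ae_map_singleton_ne_zero hG (countable_range_gridSnap d h)] with a ha
  rw [cellKernel, condDistrib_id_eq_cond hG ha]
  refine ae_cond_of_forall_mem (hG (measurableSet_singleton a)) ?_
  rintro x rfl
  rw [norm_sub_rev]
  exact norm_gridSnap_sub_le hh x

namespace IsHolderDensity

lemma norm_setIntegral_sub_le [IsFiniteMeasure P] (hf : IsHolderDensity α C P f) (hα : 0 ≤ α)
    {s : Set (Euc d)} (hs : MeasurableSet s) (hsc : s ⊆ unitCube d) {a : Euc d}
    (ha : a ∈ unitCube d) {r : ℝ} (hr0 : 0 ≤ r) (hr : ∀ x ∈ s, ‖x - a‖ ≤ r)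
    (hmean : ∫ x in s, (x - a) = 0) :
    ‖∫ x in s, (x - a) ∂P‖ ≤ r * (C ^ 2 * r ^ α) * P.real s := by
  have hC := hf.pos
  have hvol : volume s < ∞ := (hf.volume_le hs hsc).trans_lt (by finiteness)
  have hvol_le : volume.real s ≤ C * P.real s := by
    simpa [Measure.real, hC.le] using
      ENNReal.toReal_mono (by finiteness) (hf.volume_le hs hsc)
  have hint : IntegrableOn (fun x => x - a) s :=
    Measure.integrableOn_of_bounded hvol.ne (by fun_prop)
      ((ae_restrict_iff' hs).2 (ae_of_all _ hr))
  have hf_le : ∀ x ∈ s, ‖(f x : ℝ)‖ ≤ C := fun x hx => by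
    rw [Real.norm_of_nonneg (f x).coe_nonneg]
    exact hf.le x (hsc hx)
  have hfint : IntegrableOn (fun x => (f x : ℝ) • (x - a)) s :=
    hint.bdd_smul C hf.measurable.coe_nnreal_real.aestronglyMeasurable
      ((ae_restrict_iff' hs).2 (ae_of_all _ hf_le))
  have hconst : IntegrableOn (fun x => (f a : ℝ) • (x - a)) s := hint.fun_smul _
  have hcenter : ∫ x in s, (x - a) ∂P = ∫ x in s, ((f x : ℝ) - f a) • (x - a) := by
    conv_lhs => rw [hf.eq_withDensity]
    rw [setIntegral_withDensity_eq_setIntegral_smul hf.measurable _ hs]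
    simp only [sub_smul]
    rw [integral_sub hfint hconst, integral_smul, hmean, smul_zero, sub_zero]
    rfl
  calc ‖∫ x in s, (x - a) ∂P‖ ≤ C * r ^ α * r * volume.real s := by
        rw [hcenter]
        refine norm_setIntegral_le_of_norm_le_const hvol fun x hx => ?_
        rw [norm_smul]
        have hxr := hr x hx
        have hfx : ‖(f x : ℝ) - f a‖ ≤ C * r ^ α :=
          (hf.holder x (hsc hx) a ha).trans (by gcongr)
        gcongr
    _ ≤ C * r ^ α * r * (C * P.real s) := by gcongr
    _ = r * (C ^ 2 * r ^ α) * P.real s := by ring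

lemma norm_drift_cellKernel_le_of_notMem_boundaryLayer [IsFiniteMeasure P]
    (hf : IsHolderDensity α C P f) (hα : 0 ≤ α) (hh : 0 < h) {y : Euc d}
    (hy : y ∉ boundaryLayer d h) (hatom : P.map (gridSnap d h) {gridSnap d h y} ≠ 0) :
    ‖drift (cellKernel P h) (gridSnap d h y)‖ ≤ √d * h * (C ^ 2 * (√d * h) ^ α) := by
  have hG := measurable_gridSnap (d := d) h
  set a := gridSnap d h y
  set s := gridSnap d h ⁻¹' {a}
  have hs : MeasurableSet s := hG (measurableSet_singleton a)
  have hsc : s ⊆ unitCube d := fun x hx =>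
    mem_unitCube_of_notMem_boundaryLayer hy (abs_sub_le_of_gridSnap_eq hh hx)
  have ha : a ∈ unitCube d := mem_unitCube_of_notMem_boundaryLayer hy fun i =>
    (abs_gridSnap_sub_apply_le hh y i).trans (half_le_self hh.le)
  have hr : ∀ x ∈ s, ‖x - a‖ ≤ √d * h := fun x hx => by
    rw [norm_sub_rev, ← (show gridSnap d h x = a from hx)]
    exact norm_gridSnap_sub_le hh x
  have hbary := hf.norm_setIntegral_sub_le hα hs hsc ha (by positivity) hr
    (setIntegral_sub_gridSnap_eq_zero hh y)
  have hpos : 0 < P.real s :=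
    ENNReal.toReal_pos (Measure.map_apply hG (measurableSet_singleton a) ▸ hatom)
      (measure_ne_top P s)
  rw [drift, cellKernel, condDistrib_id_eq_cond hG hatom, ProbabilityTheory.cond,
    integral_smul_measure, ENNReal.toReal_inv, norm_smul, norm_inv, ← measureReal_def,
    Real.norm_of_nonneg hpos.le, inv_mul_le_iff₀ hpos]
  exact hbary.trans_eq (mul_comm _ _)

lemma integral_norm_drift_cellKernel_le [IsProbabilityMeasure P] (hf : IsHolderDensity α C P f)
    (hα0 : 0 ≤ α) (hα1 : α ≤ 1) (hh : 0 < h) (hh1 : h ≤ 1) :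
    ∫ a, ‖drift (cellKernel P h) a‖ ∂(P.map (gridSnap d h)) ≤
      √d * h * (oscConst d α C * h ^ α) := by
  have hG := measurable_gridSnap (d := d) h
  have hC := hf.pos
  rw [integral_map hG.aemeasurable (measurable_drift _).norm.aestronglyMeasurable]
  refine hf.integral_le_oscConst_mul hα1 hh hh1 (by positivity) (fun x => norm_nonneg _) ?_
  filter_upwards [ae_of_ae_map hG.aemeasurable
      (ae_map_singleton_ne_zero hG (countable_range_gridSnap d h)),
    ae_of_ae_map hG.aemeasurable (displacementLE_cellKernel (P := P) hh)] with x hatom hdisp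
  by_cases hx : x ∈ boundaryLayer d h
  · rw [Set.indicator_of_mem hx, Pi.one_apply]
    refine (norm_drift_le hdisp).trans (le_mul_of_one_le_right (by positivity) ?_)
    exact le_add_of_nonneg_left (by positivity)
  · rw [Set.indicator_of_notMem hx, add_zero]
    exact hf.norm_drift_cellKernel_le_of_notMem_boundaryLayer hα0 hh hx hatom

lemma ae_map_gridSnap_abs_sub_half_le (hf : IsHolderDensity α C P f) (hh : 0 < h) (hh1 : h ≤ 1) :
    ∀ᵐ a ∂(P.map (gridSnap d h)), ∀ i, |a i - 1 / 2| ≤ 1 := by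
  refine ae_all_iff.2 fun i => (ae_map_iff (measurable_gridSnap h).aemeasurable
    (measurableSet_le (by fun_prop) measurable_const)).2 ?_
  filter_upwards [hf.ae_mem_unitCube] with x hx
  have hsnap := abs_le.1 (abs_gridSnap_sub_apply_le hh x i)
  exact abs_le.2 ⟨by linarith [(hx i).1, hsnap.1], by linarith [(hx i).2, hsnap.2]⟩

lemma ae_norm_sub_le_of_mem_couplings_map_gridSnap (hf : IsHolderDensity α C P f)
    {f' : Euc d → ℝ≥0} (hf' : IsHolderDensity α C Q f') (hh : 0 < h) (hh1 : h ≤ 1)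
    {γ : Measure (Euc d × Euc d)}
    (hγ : γ ∈ Couplings (P.map (gridSnap d h)) (Q.map (gridSnap d h))) :
    ∀ᵐ p ∂γ, ‖p.1 - p.2‖ ≤ √d * 2 := by
  filter_upwards [ae_fst_of_mem_couplings hγ (hf.ae_map_gridSnap_abs_sub_half_le hh hh1),
    ae_snd_of_mem_couplings hγ (hf'.ae_map_gridSnap_abs_sub_half_le hh hh1)] with p hp₁ hp₂
  refine norm_le_sqrt_mul_of_forall_abs_le zero_le_two fun i => ?_
  have h₁ := abs_le.1 (hp₁ i)
  have h₂ := abs_le.1 (hp₂ i)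
  rw [PiLp.sub_apply, abs_le]
  constructor <;> linarith

lemma correlation_drift_cellKernel_le [IsProbabilityMeasure P] (hf : IsHolderDensity α C P f)
    (hα0 : 0 ≤ α) (hα1 : α ≤ 1) (hh : 0 < h) (hh1 : h ≤ 1) {R : Measure (Euc d)}
    {γ : Measure (Euc d × Euc d)} (hγ : γ ∈ Couplings (P.map (gridSnap d h)) R) {D : ℝ}
    (hD0 : 0 ≤ D) (hD : ∀ᵐ p ∂γ, ‖p.1 - p.2‖ ≤ D) :
    correlation (drift (cellKernel P h)) γ ≤ D * (√d * h * (oscConst d α C * h ^ α)) := by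
  have hint : Integrable (drift (cellKernel P h)) (P.map (gridSnap d h)) :=
    .of_bound (measurable_drift _).aestronglyMeasurable (√d * h)
      ((displacementLE_cellKernel hh).mono fun _ => norm_drift_le)
  exact (le_abs_self _).trans ((abs_correlation_le hγ hD hint).trans
    (by gcongr; exact hf.integral_norm_drift_cellKernel_le hα0 hα1 hh hh1))

theorem W2sq_le_W2sq_map_gridSnap [IsProbabilityMeasure P] [IsProbabilityMeasure Q]
    (hf : IsHolderDensity α C P f) {f' : Euc d → ℝ≥0} (hf' : IsHolderDensity α C Q f')
    (hα0 : 0 ≤ α) (hα1 : α ≤ 1) (hh : 0 < h) (hh1 : h ≤ 1) :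
    W2sq P Q ≤ W2sq (P.map (gridSnap d h)) (Q.map (gridSnap d h)) +
      (8 * d * oscConst d α C + 4 * d + 1) * h ^ (1 + α) := by
  have hG := measurable_gridSnap (d := d) h
  have := Measure.isProbabilityMeasure_map (μ := P) hG.aemeasurable
  have := Measure.isProbabilityMeasure_map (μ := Q) hG.aemeasurable
  have hε : 0 < h ^ (1 + α) := by positivity
  obtain ⟨γ, hγ, hopt⟩ := exists_mem_couplings_integral_le
    (P := P.map (gridSnap d h)) (Q := Q.map (gridSnap d h)) hε
  have hD := hf.ae_norm_sub_le_of_mem_couplings_map_gridSnap hf' hh hh1 hγ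
  have hP := hf.correlation_drift_cellKernel_le hα0 hα1 hh hh1 hγ (by positivity) hD
  have hQ := hf'.correlation_drift_cellKernel_le hα0 hα1 hh hh1 (map_swap_mem_couplings hγ)
    (by positivity) (ae_map_swap_norm_sub_le hD)
  have hcomp := W2sq_comp_le hγ hD (displacementLE_cellKernel (P := P) hh)
    (displacementLE_cellKernel (P := Q) hh)
  rw [cellKernel_comp_map_gridSnap, cellKernel_comp_map_gridSnap] at hcomp
  have hcorr : √d * 2 * (√d * h * (oscConst d α C * h ^ α)) =
      2 * d * oscConst d α C * h ^ (1 + α) :=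
    calc √d * 2 * (√d * h * (oscConst d α C * h ^ α))
        = 2 * √d ^ 2 * oscConst d α C * (h * h ^ α) := by ring
      _ = 2 * d * oscConst d α C * h ^ (1 + α) := by
          rw [Real.sq_sqrt (Nat.cast_nonneg d), Real.rpow_add hh, Real.rpow_one]
  have hr := add_sqrt_mul_sq_le_rpow d hh hh1 hα1
  linarith

end IsHolderDensity

end LowerBound

theorem grid_discretization_error_general (d : ℕ) {α C : ℝ} (hα0 : 0 < α) (hα1 : α ≤ 1)
    (hC : 0 < C) :
    ∃ K > (0 : ℝ), ∀ P Q : Measure (Euc d), IsProbabilityMeasure P → IsProbabilityMeasure Q →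
      IsControlled d α C P Q → ∀ h : ℝ, 0 < h → h ≤ 1 →
        |W2sq (P.map (gridSnap d h)) (Q.map (gridSnap d h)) - W2sq P Q| ≤ K * h ^ (1 + α) := by
  have hswap : 0 ≤ swapConst d α C := swapConst_nonneg hC.le
  refine ⟨max (8 * d + 2 + 2 * swapConst d α C) (8 * d * oscConst d α C + 4 * d + 1),
    lt_max_of_lt_left (by positivity), ?_⟩
  rintro P Q _ _ ⟨μ, ν, hP, hQ, ⟨Cμ, Cν, hCμ, hCν, hsum, hμ, hν⟩, hμb, hνb⟩ h hh hh1
  have hf := IsHolderDensity.of_restrict_withDensity hα0 hC (by linarith) hP hμ hμb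
  have hf' := IsHolderDensity.of_restrict_withDensity hα0 hC (by linarith) hQ hν hνb
  refine abs_sub_le_iff.2 ⟨?_, ?_⟩ <;> rw [sub_le_iff_le_add']
  · refine (hf.W2sq_map_gridSnap_le hf' hα0.le hα1 hh hh1).trans ?_
    gcongr
    exact le_max_left _ _
  · refine (hf.W2sq_le_W2sq_map_gridSnap hf' hα0.le hα1 hh hh1).trans ?_
    gcongr
    exact le_max_right _ _

/-- For `(α,C)`-controlled probability measures `P, Q` on `(0,1)^d`,
there is a constant `K > 0` depending only on `d, C, α` such that for every grid
width `h = 1/L`, `|W₂²(G_h#P, G_h#Q) − W₂²(P,Q)| ≤ K h^{1+α}`. -/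
theorem grid_discretization_error (d : ℕ) (hd : 1 ≤ d) (α C : ℝ)
    (hα0 : 0 < α) (hα1 : α < 1) (hC : 1 < C) :
    ∃ K > (0 : ℝ), ∀ P Q : Measure (Euc d),
      IsProbabilityMeasure P → IsProbabilityMeasure Q →
      IsControlled d α C P Q →
      ∀ h : ℝ, 0 < h → (∃ L : ℕ, 0 < L ∧ h = 1 / L) →
        |W2sq (P.map (gridSnap d h)) (Q.map (gridSnap d h)) - W2sq P Q|
          ≤ K * h ^ (1 + α) := by
  obtain ⟨K, hK, hbound⟩ :=
    grid_discretization_error_general d hα0 hα1.le (zero_lt_one.trans hC)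
  refine ⟨K, hK, fun P Q hP hQ hPQ h hh => ?_⟩
  rintro ⟨L, hL, rfl⟩
  exact hbound P Q hP hQ hPQ _ hh (div_le_one_of_le₀ (Nat.one_le_cast.2 hL) L.cast_nonneg)
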